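/- Let N ≥ 3 be odd, ζ ∈ ℝ, ν1, ν2 ≥ 0 with ν1+ν2 = 1, V = ν1−ν2. On (ℂ²)^{⊗N} set |Ψ1⟩ = cos(ζ/2)|0⟩^{⊗N} + sin(ζ/2)|1⟩^{⊗N}, |Ψ2⟩ = sin(ζ/2)|0⟩^{⊗N} − cos(ζ/2)|1⟩^{⊗N}, and ρ = ν1|Ψ1⟩⟨Ψ1| + ν2|Ψ2⟩⟨Ψ2|. Then for all angle lists (θ_1,φ_1),…,(θ_N,φ_N): (i) Tr( ρ · ⊗_{k=1}^{N} (n(θ_k,φ_k)·σ) ) = V cosζ ∏_{k=1}^{N} cosθ_k + V sinζ (∏_{k=1}^{N} sinθ_k) cos(φ_1+⋯+φ_N); and (ii) Tr( ρ · (⊗_{k=1}^{N−1} (n(θ_k,φ_k)·σ)) ⊗ I ) = ∏_{k=1}^{N−1} cosθ_k. -/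

import Mathlib

/-!
The vectors `|Ψ1⟩`, `|Ψ2⟩` are real combinations `a|0…0⟩ + b|1…1⟩`, so `⟨Ψ|M|Ψ⟩` involves only the
four corner entries of `M` (`trace_outer_mul`). Writing `a`, `b` in terms of the half angle `ζ/2`,
the double-angle formulas give (`trace_ghzRho_mul`)
`Tr(ρM) = (M₀₀ + M₁₁)/2 + V cosζ (M₀₀ - M₁₁)/2 + V sinζ (M₀₁ + M₁₀)/2`.

For a tensor product `M` the corner entries are products of the entries of the factors. The diagonal
entries of `n(θ,φ)·σ` are `± cos θ` and its off-diagonal entries are `sin θ · exp(∓iφ)`. With an odd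
number of spin factors, `M₁₁ = -M₀₀ = -∏ cos θ`, and `M₀₁ + M₁₀ = 2 ∏ sin θ · cos (∑ φ)`, which is
the full correlation. If the last factor is the identity, the remaining number of factors is even,
so `M₁₁ = M₀₀ = ∏ cos θ`, while `M₀₁ = M₁₀ = 0` because the identity is diagonal.
-/

open Matrix Complex
open scoped ComplexOrder

noncomputable section

/-- The `j`-th standard basis vector of `ℂ²` (`|0⟩` and `|1⟩`). -/
def e2 (j : Fin 2) : Fin 2 → ℂ := fun i => if i = j then 1 else 0

/-- Tensor (Kronecker) product of two qubit vectors. -/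
def tp2 (v w : Fin 2 → ℂ) : Fin 2 × Fin 2 → ℂ := fun p => v p.1 * w p.2

/-- Tensor (Kronecker) product of three qubit vectors. -/
def tp3 (v w u : Fin 2 → ℂ) : Fin 2 × Fin 2 × Fin 2 → ℂ :=
  fun p => v p.1 * w p.2.1 * u p.2.2

/-- Kronecker product of two `2×2` matrices. -/
def tm2 (A B : Matrix (Fin 2) (Fin 2) ℂ) : Matrix (Fin 2 × Fin 2) (Fin 2 × Fin 2) ℂ :=
  Matrix.of fun p q => A p.1 q.1 * B p.2 q.2

/-- Kronecker product of three `2×2` matrices. -/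
def tm3 (A B C : Matrix (Fin 2) (Fin 2) ℂ) :
    Matrix (Fin 2 × Fin 2 × Fin 2) (Fin 2 × Fin 2 × Fin 2) ℂ :=
  Matrix.of fun p q => A p.1 q.1 * B p.2.1 q.2.1 * C p.2.2 q.2.2

/-- Outer product `|v⟩⟨v|`. -/
def outer {n : Type*} [Fintype n] (v : n → ℂ) : Matrix n n ℂ := Matrix.vecMulVec v (star v)

def sigmaX : Matrix (Fin 2) (Fin 2) ℂ := !![0, 1; 1, 0]
def sigmaY : Matrix (Fin 2) (Fin 2) ℂ := !![0, -Complex.I; Complex.I, 0]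
def sigmaZ : Matrix (Fin 2) (Fin 2) ℂ := !![1, 0; 0, -1]

/-- The spin observable `n(θ,φ)·σ = sinθ cosφ σx + sinθ sinφ σy + cosθ σz`. -/
def nsigma (θ φ : ℝ) : Matrix (Fin 2) (Fin 2) ℂ :=
  ((Real.sin θ * Real.cos φ : ℝ) : ℂ) • sigmaX +
    ((Real.sin θ * Real.sin φ : ℝ) : ℂ) • sigmaY + ((Real.cos θ : ℝ) : ℂ) • sigmaZ

/-- Kronecker tensor product of `N` `2×2` matrices, as a matrix indexed by `Fin N → Fin 2`. -/
def tpow {N : ℕ} (M : Fin N → Matrix (Fin 2) (Fin 2) ℂ) :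
    Matrix (Fin N → Fin 2) (Fin N → Fin 2) ℂ :=
  Matrix.of fun i j => ∏ k, M k (i k) (j k)

/-- Kronecker tensor product of `N` qubit vectors, indexed by `Fin N → Fin 2`. -/
def vpow {N : ℕ} (v : Fin N → (Fin 2 → ℂ)) : (Fin N → Fin 2) → ℂ :=
  fun i => ∏ k, v k (i k)

/-- `|Ψ1⟩ = cos(ζ/2)|0⟩^{⊗N} + sin(ζ/2)|1⟩^{⊗N}`. -/
def ghzPsi1 (N : ℕ) (ζ : ℝ) : (Fin N → Fin 2) → ℂ := fun i =>
  (Real.cos (ζ / 2) : ℂ) * vpow (fun _ => e2 0) i +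
    (Real.sin (ζ / 2) : ℂ) * vpow (fun _ => e2 1) i

/-- `|Ψ2⟩ = sin(ζ/2)|0⟩^{⊗N} − cos(ζ/2)|1⟩^{⊗N}`. -/
def ghzPsi2 (N : ℕ) (ζ : ℝ) : (Fin N → Fin 2) → ℂ := fun i =>
  (Real.sin (ζ / 2) : ℂ) * vpow (fun _ => e2 0) i -
    (Real.cos (ζ / 2) : ℂ) * vpow (fun _ => e2 1) i

/-- `ρ = ν1|Ψ1⟩⟨Ψ1| + ν2|Ψ2⟩⟨Ψ2|` on `(ℂ²)^{⊗N}`. -/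
def ghzRho (N : ℕ) (ζ ν1 ν2 : ℝ) : Matrix (Fin N → Fin 2) (Fin N → Fin 2) ℂ :=
  (ν1 : ℂ) • outer (ghzPsi1 N ζ) + (ν2 : ℂ) • outer (ghzPsi2 N ζ)

lemma vpow_e2 {N : ℕ} (j : Fin 2) :
    vpow (fun _ : Fin N => e2 j) = Pi.single (fun _ => j) 1 := by
  ext i
  by_cases h : i = fun _ => j
  · subst h
    simp [vpow, e2]
  · obtain ⟨k, hk⟩ := Function.ne_iff.mp h
    rw [Pi.single_eq_of_ne h]
    exact Finset.prod_eq_zero (Finset.mem_univ k) (if_neg hk)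

/-- Because the coefficients `a`, `b` are real, conjugating the vector leaves them unchanged. -/
lemma trace_outer_mul {n : Type*} [Fintype n] [DecidableEq n] (a b : ℝ) (p q : n)
    (M : Matrix n n ℂ) :
    (outer ((a : ℂ) • Pi.single p 1 + (b : ℂ) • Pi.single q 1) * M).trace =
      a ^ 2 * M p p + a * b * (M p q + M q p) + b ^ 2 * M q q := by
  have hs : ∀ r : n, star (Pi.single r 1 : n → ℂ) = Pi.single r 1 := fun r => by
    rw [← Pi.single_star, star_one]
  rw [outer, vecMulVec_mul, trace_vecMulVec, star_add, star_smul, star_smul, hs, hs,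
    add_vecMul, smul_vecMul, smul_vecMul, single_one_vecMul, single_one_vecMul]
  simp only [add_dotProduct, smul_dotProduct, single_one_dotProduct, Pi.add_apply, Pi.smul_apply,
    smul_eq_mul, row_apply, RCLike.star_def, conj_ofReal]
  ring

lemma trace_ghzRho_mul (N : ℕ) (ζ ν1 ν2 : ℝ) (hsum : ν1 + ν2 = 1)
    (M : Matrix (Fin N → Fin 2) (Fin N → Fin 2) ℂ) :
    (ghzRho N ζ ν1 ν2 * M).trace =
      (M (fun _ => 0) (fun _ => 0) + M (fun _ => 1) (fun _ => 1)) / 2 +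
      ((ν1 - ν2) * Real.cos ζ : ℝ) *
        ((M (fun _ => 0) (fun _ => 0) - M (fun _ => 1) (fun _ => 1)) / 2) +
      ((ν1 - ν2) * Real.sin ζ : ℝ) *
        ((M (fun _ => 0) (fun _ => 1) + M (fun _ => 1) (fun _ => 0)) / 2) := by
  have h1 : ghzPsi1 N ζ = ((Real.cos (ζ / 2) : ℝ) : ℂ) • Pi.single (fun _ => 0) 1 +
      ((Real.sin (ζ / 2) : ℝ) : ℂ) • Pi.single (fun _ => 1) 1 := by
    rw [← vpow_e2, ← vpow_e2]
    rfl
  have h2 : ghzPsi2 N ζ = ((Real.sin (ζ / 2) : ℝ) : ℂ) • Pi.single (fun _ => 0) 1 +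
      ((-Real.cos (ζ / 2) : ℝ) : ℂ) • Pi.single (fun _ => 1) 1 := by
    rw [← vpow_e2, ← vpow_e2]
    ext i
    simp [ghzPsi2, sub_eq_add_neg]
  have hc : ((Real.cos ζ : ℝ) : ℂ) =
      (Real.cos (ζ / 2) : ℂ) ^ 2 - (Real.sin (ζ / 2) : ℂ) ^ 2 := by
    exact_mod_cast (by rw [← Real.cos_two_mul', mul_div_cancel₀ ζ two_ne_zero] :
      Real.cos ζ = Real.cos (ζ / 2) ^ 2 - Real.sin (ζ / 2) ^ 2)
  have hs : ((Real.sin ζ : ℝ) : ℂ) = 2 * (Real.sin (ζ / 2) : ℂ) * (Real.cos (ζ / 2) : ℂ) := by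
    exact_mod_cast (by rw [← Real.sin_two_mul, mul_div_cancel₀ ζ two_ne_zero] :
      Real.sin ζ = 2 * Real.sin (ζ / 2) * Real.cos (ζ / 2))
  have hp : (Real.sin (ζ / 2) : ℂ) ^ 2 + (Real.cos (ζ / 2) : ℂ) ^ 2 = 1 := by
    exact_mod_cast Real.sin_sq_add_cos_sq (ζ / 2)
  have hν : (ν1 : ℂ) + ν2 = 1 := by exact_mod_cast hsum
  rw [ghzRho, h1, h2, add_mul, smul_mul, smul_mul, trace_add, trace_smul, trace_smul,
    trace_outer_mul, trace_outer_mul]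
  simp only [ofReal_mul, ofReal_sub, ofReal_neg, smul_eq_mul, hc, hs]
  generalize M (fun _ => 0) (fun _ => 0) = A
  generalize M (fun _ => 1) (fun _ => 1) = D
  generalize (Real.sin (ζ / 2) : ℂ) = s at *
  generalize (Real.cos (ζ / 2) : ℂ) = c at *
  linear_combination (A + D) / 2 * ((ν1 + ν2) * hp + hν)

lemma nsigma_zero_zero (θ φ : ℝ) : nsigma θ φ 0 0 = (Real.cos θ : ℂ) := by
  simp [nsigma, sigmaX, sigmaY, sigmaZ]

lemma nsigma_one_one (θ φ : ℝ) : nsigma θ φ 1 1 = -(Real.cos θ : ℂ) := by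
  simp [nsigma, sigmaX, sigmaY, sigmaZ]

lemma nsigma_zero_one (θ φ : ℝ) :
    nsigma θ φ 0 1 = (Real.sin θ : ℂ) * exp (-((φ : ℂ) * I)) := by
  rw [← neg_mul, exp_mul_I, Complex.cos_neg, Complex.sin_neg]
  simp [nsigma, sigmaX, sigmaY, sigmaZ]
  ring

lemma nsigma_one_zero (θ φ : ℝ) :
    nsigma θ φ 1 0 = (Real.sin θ : ℂ) * exp ((φ : ℂ) * I) := by
  rw [exp_mul_I]
  simp [nsigma, sigmaX, sigmaY, sigmaZ]
  ring

/-- For odd `N = 2m+1 ≥ 3`, the `N`-qubit correlation functions of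
`ρ = ν1|Ψ1⟩⟨Ψ1| + ν2|Ψ2⟩⟨Ψ2|`:
(i) `Tr(ρ·⊗_{k=1}^N n(θ_k,φ_k)·σ) = V cosζ Π_k cosθ_k + V sinζ (Π_k sinθ_k) cos(Σ_k φ_k)`;
(ii) `Tr(ρ·(⊗_{k=1}^{N−1} n(θ_k,φ_k)·σ) ⊗ I) = Π_{k=1}^{N−1} cosθ_k`. -/
theorem odd_N_correlation (m : ℕ) (hm : 1 ≤ m) (ζ ν1 ν2 : ℝ)
    (hν1 : 0 ≤ ν1) (hν2 : 0 ≤ ν2) (hsum : ν1 + ν2 = 1) (V : ℝ) (hV : V = ν1 - ν2) :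
    (∀ θ φ : Fin (2 * m + 1) → ℝ,
        (ghzRho (2 * m + 1) ζ ν1 ν2 * tpow (fun k => nsigma (θ k) (φ k))).trace =
          ((V * Real.cos ζ * (∏ k, Real.cos (θ k)) +
            V * Real.sin ζ * (∏ k, Real.sin (θ k)) * Real.cos (∑ k, φ k) : ℝ) : ℂ)) ∧
      (∀ θ φ : Fin (2 * m) → ℝ,
        (ghzRho (2 * m + 1) ζ ν1 ν2 *
            tpow (fun k : Fin (2 * m + 1) =>
              if h : (k : ℕ) < 2 * m then nsigma (θ ⟨k, h⟩) (φ ⟨k, h⟩) else 1)).trace =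
          ((∏ k, Real.cos (θ k) : ℝ) : ℂ)) := by
  subst hV
  constructor
  · intro θ φ
    have hpos : ∏ k, exp ((φ k : ℂ) * I) = exp (((∑ k, φ k : ℝ) : ℂ) * I) := by
      rw [← exp_sum, ← Finset.sum_mul, ofReal_sum]
    have hneg : ∏ k, exp (-((φ k : ℂ) * I)) = exp (-(((∑ k, φ k : ℝ) : ℂ) * I)) := by
      rw [← exp_sum, Finset.sum_neg_distrib, ← Finset.sum_mul, ofReal_sum]
    have hcos : ((Real.cos (∑ k, φ k) : ℝ) : ℂ) =
        (exp (((∑ k, φ k : ℝ) : ℂ) * I) + exp (-(((∑ k, φ k : ℝ) : ℂ) * I))) / 2 := by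
      rw [ofReal_cos, Complex.cos, neg_mul]
    rw [trace_ghzRho_mul _ _ _ _ hsum]
    simp only [tpow, of_apply, nsigma_zero_zero, nsigma_one_one, nsigma_zero_one, nsigma_one_zero,
      Finset.prod_mul_distrib, hpos, hneg, Finset.prod_neg, Finset.card_univ, Fintype.card_fin,
      (odd_two_mul_add_one m).neg_one_pow]
    simp only [ofReal_add, ofReal_mul, ofReal_prod, hcos]
    ring
  · intro θ φ
    rw [trace_ghzRho_mul _ _ _ _ hsum]
    simp only [tpow, of_apply, Fin.prod_univ_castSucc (n := 2 * m), Fin.val_castSucc, Fin.is_lt,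
      Fin.val_last, lt_irrefl, dite_true, dite_false, Fin.eta, one_apply_eq, mul_one,
      nsigma_zero_zero, nsigma_one_one, Finset.prod_neg, Finset.card_univ, Fintype.card_fin,
      (even_two_mul m).neg_one_pow, one_mul, one_apply_ne zero_ne_one,
      one_apply_ne one_ne_zero, mul_zero]
    rw [ofReal_prod]
    ring
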